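/- Let 𝔞 be a cofinite monomial ideal in k[x₁,…,x_d]. Then for every real number c > 0 one has m(c+1) ≥ m(c); in particular, if c is a jumping number of 𝔞 then so is c+1. (Monomial case of Proposition 3.5.) -/

import Mathlib

open Set Filter Pointwise MeasureTheory

/-- The map sending a vector of natural number exponents to the corresponding
real vector. -/
noncomputable def expToReal (d : ℕ) (v : Fin d → ℕ) : Fin d → ℝ := fun i => (v i : ℝ)

/-- The Newton polyhedron of a monomial ideal with exponent set `S`:
the convex hull in `ℝ^d` of the exponent vectors. -/
noncomputable def newtonPoly (d : ℕ) (S : Set (Fin d → ℕ)) : Set (Fin d → ℝ) :=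
  convexHull ℝ (expToReal d '' S)

/-- The multiplicity `m(c)` of `c > 0` as a (candidate) jumping number of the monomial
ideal with exponent set `S`: the number of `v ∈ ℕ^d` with `v + 𝟏` on the boundary part
`c•P(𝔞) \ int(c•P(𝔞))` of the dilated Newton polyhedron. -/
noncomputable def multJump (d : ℕ) (S : Set (Fin d → ℕ)) (c : ℝ) : ℕ :=
  Nat.card {v : Fin d → ℕ |
    expToReal d v + 1 ∈ c • newtonPoly d S \ interior (c • newtonPoly d S)}

/-! If `u = c • p` with `p` a convex combination of points of `T`, then `(c + 1) • p = u + p` is the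
same convex combination of the points `u + s`, `s ∈ T`. As interiors of convex sets are convex, a
boundary point `u` of `c • conv T` therefore has some translate `u + s` on the boundary of
`(c + 1) • conv T`. Choosing for each `u` the least such `s` in a fixed well-order makes
`u ↦ u + s` injective: if `u + s = u' + s'`, this point is also the midpoint of `u + s'` and
`u' + s`, so neither of these is interior, `s'` was available to `u` and `s` to `u'`, and `s = s'`
by minimality. -/

theorem encard_le_encard_of_add_exchange {M : Type*} [Add M] [IsRightCancelAdd M] {A B T : Set M}
    (hex : ∀ u ∈ A, ∃ s ∈ T, u + s ∈ B)
    (hexchange : ∀ u ∈ A, ∀ u' ∈ A, ∀ s ∈ T, ∀ s' ∈ T, u + s = u' + s' → u + s ∈ B →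
      u + s' ∈ B) :
    A.encard ≤ B.encard := by
  obtain ⟨_, _⟩ := exists_wellFoundedLT M
  have hmin : ∀ u ∈ A, ∃ s, Minimal (fun s => s ∈ T ∧ u + s ∈ B) s := fun u hu =>
    exists_minimal_of_wellFoundedLT _ (hex u hu)
  choose! φ hφ using hmin
  have hφ_le : ∀ u ∈ A, ∀ u' ∈ A, u + φ u = u' + φ u' → φ u ≤ φ u' := fun u hu u' hu' h =>
    not_lt.1 fun hlt => (hφ u hu).not_prop_of_lt hlt ⟨(hφ u' hu').prop.1,
      hexchange u hu u' hu' _ (hφ u hu).prop.1 _ (hφ u' hu').prop.1 h (hφ u hu).prop.2⟩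
  refine encard_le_encard_of_injOn (f := fun u => u + φ u) (fun u hu => (hφ u hu).prop.2) ?_
  intro u hu u' hu' h
  have hs : φ u = φ u' := (hφ_le u hu u' hu' h).antisymm (hφ_le u' hu' u hu h.symm)
  exact add_right_cancel (h.trans (congrArg (u' + ·) hs.symm))

theorem add_mem_add_one_smul {𝕜 E : Type*} [Field 𝕜] [LinearOrder 𝕜] [IsStrictOrderedRing 𝕜]
    [AddCommGroup E] [Module 𝕜 E] {P : Set E} (hP : Convex 𝕜 P) {c : 𝕜} (hc : 0 ≤ c)
    {u s : E} (hu : u ∈ c • P) (hs : s ∈ P) : u + s ∈ (c + 1) • P := by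
  rw [hP.add_smul hc zero_le_one, one_smul]
  exact add_mem_add hu hs

section DilateBoundary

variable {𝕜 E : Type*} [Field 𝕜] [AddCommGroup E] [Module 𝕜 E] [TopologicalSpace E]

/-- The boundary points of the dilate `c • P` that belong to it. No closure is taken, so this is
the topological frontier of `c • P` only when `c • P` is closed. -/
def dilateBoundary (c : 𝕜) (P : Set E) : Set E :=
  c • P \ interior (c • P)

variable [LinearOrder 𝕜] [IsStrictOrderedRing 𝕜] [IsTopologicalAddGroup E]
  [ContinuousConstSMul 𝕜 E] {c : 𝕜}

theorem add_notMem_interior_of_add_eq_add {A : Set E} (hA : Convex 𝕜 A) {u u' s s' : E}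
    (h : u + s = u' + s') (hmem : u' + s ∈ A) (hu : u + s ∉ interior A) :
    u + s' ∉ interior A := fun hint => hu <| by
  have hmid : u + s = (2⁻¹ : 𝕜) • (u + s') + (2⁻¹ : 𝕜) • (u' + s) :=
    calc
      u + s = (2⁻¹ : 𝕜) • (u + s + (u' + s')) := by rw [← h]; module
      _ = (2⁻¹ : 𝕜) • (u + s') + (2⁻¹ : 𝕜) • (u' + s) := by module
  rw [hmid]
  exact hA.combo_interior_self_mem_interior hint hmem (by norm_num) (by norm_num) (by norm_num)

theorem exists_add_mem_dilateBoundary_convexHull (hc : 0 < c) {T : Set E} {u : E}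
    (hu : u ∈ dilateBoundary c (convexHull 𝕜 T)) :
    ∃ s ∈ T, u + s ∈ dilateBoundary (c + 1) (convexHull 𝕜 T) := by
  have hc' : c + 1 ≠ 0 := (add_pos hc one_pos).ne'
  set P := convexHull 𝕜 T
  have hP : Convex 𝕜 P := convex_convexHull 𝕜 T
  suffices h : ∃ s ∈ T, u + s ∉ interior ((c + 1) • P) by
    obtain ⟨s, hs, hus⟩ := h
    exact ⟨s, hs, add_mem_add_one_smul hP hc.le hu.1 (subset_convexHull 𝕜 T hs), hus⟩
  by_contra! hT
  obtain ⟨⟨p, hp, rfl⟩, hint⟩ := hu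
  have hsub : P ⊆ (c • p + ·) ⁻¹' interior ((c + 1) • P) :=
    convexHull_min hT ((hP.smul (c + 1)).interior.translate_preimage_right (c • p))
  have hmem : (c + 1) • p ∈ interior ((c + 1) • P) := by
    simpa only [mem_preimage, add_smul, one_smul] using hsub hp
  rw [interior_smul₀ hc', smul_mem_smul_set_iff₀ hc'] at hmem
  exact hint (by simpa only [interior_smul₀ hc.ne'] using smul_mem_smul_set hmem)

theorem add_mem_dilateBoundary_of_add_eq_add {P : Set E} (hP : Convex 𝕜 P) (hc : 0 ≤ c)
    {u u' s s' : E} (hu : u ∈ c • P) (hu' : u' ∈ c • P) (hs : s ∈ P) (hs' : s' ∈ P)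
    (h : u + s = u' + s') (hus : u + s ∈ dilateBoundary (c + 1) P) :
    u + s' ∈ dilateBoundary (c + 1) P :=
  ⟨add_mem_add_one_smul hP hc hu hs', add_notMem_interior_of_add_eq_add (hP.smul (c + 1)) h
    (add_mem_add_one_smul hP hc hu' hs) hus.2⟩

theorem encard_preimage_dilateBoundary_le_add_one {M : Type*} [AddZeroClass M]
    [IsRightCancelAdd M] (φ : M →+ E) (a : E) (S : Set M) (hc : 0 < c) :
    {v | φ v + a ∈ dilateBoundary c (convexHull 𝕜 (φ '' S))}.encard ≤
      {v | φ v + a ∈ dilateBoundary (c + 1) (convexHull 𝕜 (φ '' S))}.encard := by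
  have hφ : ∀ v s, φ (v + s) + a = φ v + a + φ s := fun v s => by
    rw [map_add, add_right_comm]
  have hS : ∀ s ∈ S, φ s ∈ convexHull 𝕜 (φ '' S) := fun s hs =>
    subset_convexHull 𝕜 _ (mem_image_of_mem φ hs)
  refine encard_le_encard_of_add_exchange (T := S) (fun v hv => ?_)
    fun v hv w hw s hs t ht h hvs => ?_
  · obtain ⟨_, ⟨s, hs, rfl⟩, hvs⟩ := exists_add_mem_dilateBoundary_convexHull hc hv
    exact ⟨s, hs, by rwa [mem_ofPred_eq, hφ]⟩
  · rw [mem_ofPred_eq, hφ] at hvs ⊢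
    exact add_mem_dilateBoundary_of_add_eq_add (convex_convexHull 𝕜 _) hc.le hv.1 hw.1 (hS s hs)
      (hS t ht) (by rw [← hφ, ← hφ, h]) hvs

end DilateBoundary

theorem convexHull_range_natCast : convexHull ℝ (range ((↑) : ℕ → ℝ)) = Ici 0 := by
  have hnonneg : range ((↑) : ℕ → ℝ) ⊆ Ici 0 := range_subset_iff.2 fun n => mem_Ici.2 n.cast_nonneg
  refine (convexHull_min hnonneg (convex_Ici 0)).antisymm fun x hx => ?_
  have hcast : ∀ n : ℕ, (n : ℝ) ∈ convexHull ℝ (range ((↑) : ℕ → ℝ)) := fun n =>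
    subset_convexHull ℝ _ (mem_range_self n)
  exact (convex_convexHull ℝ _).ordConnected.out (hcast 0) (hcast ⌈x⌉₊)
    ⟨by simpa using hx, Nat.le_ceil x⟩

theorem finite_setOf_natCast_add_one_notMem_interior_smul {ι : Type*} [Finite ι] [DecidableEq ι]
    {P : Set (ι → ℝ)} (hP : IsUpperSet P) (haxis : ∀ i, ∃ t : ℝ, Pi.single i t ∈ P) {c : ℝ}
    (hc : 0 < c) :
    {v : ι → ℕ | (fun i => (v i : ℝ)) + 1 ∉ interior (c • P)}.Finite := by
  cases nonempty_fintype ι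
  choose t ht using haxis
  refine (finite_Iic fun i => ⌈c * t i⌉₊).subset fun v hv i => ?_
  by_contra! hlt
  refine hv ?_
  rw [interior_smul₀ hc.ne', mem_smul_set_iff_inv_smul_mem₀ hc.ne']
  refine hP.mem_interior_of_forall_lt (subset_closure (ht i)) fun j => ?_
  rw [Pi.smul_apply, smul_eq_mul, lt_inv_mul_iff₀ hc, Pi.add_apply, Pi.one_apply]
  rcases eq_or_ne j i with rfl | hj
  · rw [Pi.single_eq_same]
    exact (Nat.lt_of_ceil_lt hlt).trans (lt_add_one _)
  · rw [Pi.single_eq_of_ne hj, mul_zero]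
    positivity

section Newton

variable {d : ℕ} {S : Set (Fin d → ℕ)}

theorem expToReal_add (v w : Fin d → ℕ) :
    expToReal d (v + w) = expToReal d v + expToReal d w :=
  map_add ((Nat.castAddMonoidHom ℝ).compLeft (Fin d)) v w

theorem convexHull_range_expToReal : convexHull ℝ (range (expToReal d)) = Ici 0 := by
  have hrange : range (expToReal d) = univ.pi fun _ => range ((↑) : ℕ → ℝ) :=
    range_piMap fun _ : Fin d => ((↑) : ℕ → ℝ)
  rw [hrange, convexHull_pi, convexHull_range_natCast, pi_univ_Ici]
  rfl

theorem isUpperSet_newtonPoly (hS : ∀ v ∈ S, ∀ w : Fin d → ℕ, v + w ∈ S) :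
    IsUpperSet (newtonPoly d S) := by
  have hadd : expToReal d '' S + range (expToReal d) ⊆ expToReal d '' S := by
    rintro _ ⟨_, ⟨v, hv, rfl⟩, _, ⟨w, rfl⟩, rfl⟩
    exact ⟨v + w, hS v hv w, expToReal_add v w⟩
  have horthant : newtonPoly d S + Ici 0 ⊆ newtonPoly d S := by
    rw [newtonPoly, ← convexHull_range_expToReal, ← convexHull_add]
    exact convexHull_mono hadd
  intro x y hxy hx
  rw [← add_sub_cancel x y]
  exact horthant (add_mem_add hx (sub_nonneg.2 hxy))

theorem exists_single_mem_newtonPoly (hcof : Sᶜ.Finite) (i : Fin d) :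
    ∃ t : ℝ, Pi.single i t ∈ newtonPoly d S := by
  obtain ⟨n, hn⟩ := ((Pi.single_injective i).tendsto_cofinite.eventually
    hcof.eventually_cofinite_notMem).exists
  refine ⟨n, subset_convexHull ℝ _ ⟨Pi.single i n, not_not.1 hn, ?_⟩⟩
  exact (Pi.single_op (fun _ => ((↑) : ℕ → ℝ)) (fun _ => Nat.cast_zero) i n).symm

/-- The set of exponents counted by the multiplicity of `c` as a jumping number. Its `Set.encard` is
the possibly infinite multiplicity, whereas `multJump` takes the value `0` on infinite sets. -/
def jumpExponents (S : Set (Fin d → ℕ)) (c : ℝ) : Set (Fin d → ℕ) :=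
  {v | expToReal d v + 1 ∈ dilateBoundary c (newtonPoly d S)}

theorem multJump_eq_ncard_jumpExponents (S : Set (Fin d → ℕ)) (c : ℝ) :
    multJump d S c = (jumpExponents S c).ncard :=
  rfl

theorem finite_jumpExponents (hS : ∀ v ∈ S, ∀ w : Fin d → ℕ, v + w ∈ S) (hcof : Sᶜ.Finite)
    {c : ℝ} (hc : 0 < c) : (jumpExponents S c).Finite :=
  (finite_setOf_natCast_add_one_notMem_interior_smul (isUpperSet_newtonPoly hS)
    (exists_single_mem_newtonPoly hcof) hc).subset fun _ hv => hv.2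

theorem multiplicity_monotone_under_integer_shift_general (S : Set (Fin d → ℕ)) {c : ℝ}
    (hc : 0 < c) : (jumpExponents S c).encard ≤ (jumpExponents S (c + 1)).encard :=
  encard_preimage_dilateBoundary_le_add_one ((Nat.castAddMonoidHom ℝ).compLeft (Fin d)) 1 S hc

end Newton

/-- Monomial case of Proposition 3.5: for a cofinite monomial ideal, `m(c+1) ≥ m(c)` for
every `c > 0`; in particular if `c` is a jumping number then so is `c+1`. -/
theorem multiplicity_monotone_under_integer_shift (d : ℕ) (hd : 1 ≤ d) (k : Type*) [Field k]
    (S : Set (Fin d → ℕ)) (hS : ∀ v ∈ S, ∀ w : Fin d → ℕ, v + w ∈ S)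
    (hcof : (Sᶜ : Set (Fin d → ℕ)).Finite)
    (c : ℝ) (hc : 0 < c) :
    multJump d S c ≤ multJump d S (c + 1) ∧
      (0 < multJump d S c → 0 < multJump d S (c + 1)) := by
  have hle : multJump d S c ≤ multJump d S (c + 1) := by
    rw [multJump_eq_ncard_jumpExponents, multJump_eq_ncard_jumpExponents]
    exact ENat.toNat_le_toNat (multiplicity_monotone_under_integer_shift_general S hc)
      (finite_jumpExponents hS hcof (add_pos hc one_pos)).encard_lt_top.ne
  exact ⟨hle, fun h => h.trans_le hle⟩
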